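/- Let ψ be entire, φ(z) = az + b with 0 < |a| < 1, p = b/(1-a), ψ(p) = 0, and C_{ψ,φ} bounded on F². Write q(z) = e^{conj(p)(a-1)z} ψ(z+p) = Σ_j q̂_j z^j/√(j!). Then for every nonnegative integer n and positive integer m, W(C_{ψ,φ}) contains the closed disk centered at 0 with radius |q̂_m a^n| √((n+m)!)/(2√(n! m!)). -/

import Mathlib

open MeasureTheory Complex

/-- The Gaussian measure `π⁻¹ e^{-|z|²} dA(z)` on `ℂ`. -/
noncomputable def gaussMeasure : Measure ℂ :=
  (volume : Measure ℂ).withDensity fun z => ENNReal.ofReal (Real.exp (-(‖z‖ ^ 2)) / Real.pi)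

/-- A function is entire if it is differentiable on all of `ℂ`. -/
def Entire (f : ℂ → ℂ) : Prop := Differentiable ℂ f

/-- The squared Fock-space norm `∫ |f|² dμ`. -/
noncomputable def fockNormSq (f : ℂ → ℂ) : ℝ := ∫ z, ‖f z‖ ^ 2 ∂gaussMeasure

/-- Membership in the Fock space `F²`: entire and square integrable w.r.t. the Gaussian. -/
def MemFock (f : ℂ → ℂ) : Prop :=
  Entire f ∧ Integrable (fun z => ‖f z‖ ^ 2) gaussMeasure

/-- The Fock-space inner product `⟨f, g⟩ = ∫ f ḡ dμ`. -/
noncomputable def fockInner (f g : ℂ → ℂ) : ℂ :=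
  ∫ z, f z * (starRingEnd ℂ) (g z) ∂gaussMeasure

/-- The weighted composition operator `C_{ψ,φ} f = ψ · (f ∘ φ)`. -/
def wcomp (ψ φ f : ℂ → ℂ) : ℂ → ℂ := fun z => ψ z * f (φ z)

/-- Boundedness of `C_{ψ,φ}` on `F²`. -/
def BoundedWCO (ψ φ : ℂ → ℂ) : Prop :=
  ∃ C : ℝ, ∀ f, MemFock f →
    MemFock (wcomp ψ φ f) ∧ fockNormSq (wcomp ψ φ f) ≤ C * fockNormSq f

/-- The numerical range `W(C_{ψ,φ}) = {⟨C_{ψ,φ} f, f⟩ : ‖f‖ = 1}` on `F²`. -/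
noncomputable def numRange (ψ φ : ℂ → ℂ) : Set ℂ :=
  {w | ∃ f, MemFock f ∧ fockNormSq f = 1 ∧ w = fockInner (wcomp ψ φ f) f}

/-- The point spectrum of `C_{ψ,φ}` on `F²`. -/
def pointSpectrum (ψ φ : ℂ → ℂ) : Set ℂ :=
  {lam | ∃ f, MemFock f ∧ f ≠ 0 ∧ wcomp ψ φ f = fun z => lam * f z}

/-- Compactness of `C_{ψ,φ}` on `F²`: it is bounded and the image of every sequence in the
unit ball of `F²` has a subsequence which is Cauchy in the `F²` norm. -/
def CompactWCO (ψ φ : ℂ → ℂ) : Prop :=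
  BoundedWCO ψ φ ∧ ∀ f : ℕ → ℂ → ℂ, (∀ k, MemFock (f k) ∧ fockNormSq (f k) ≤ 1) →
    ∃ g : ℕ → ℕ, StrictMono g ∧ ∀ ε : ℝ, 0 < ε → ∃ N : ℕ, ∀ i, N ≤ i → ∀ j, N ≤ j →
      fockNormSq (fun z => wcomp ψ φ (f (g i)) z - wcomp ψ φ (f (g j)) z) < ε

theorem measurable_gaussDensity :
    Measurable fun z : ℂ => ENNReal.ofReal (Real.exp (-(‖z‖ ^ 2)) / Real.pi) := by
  fun_prop

theorem integral_gaussMeasure {E : Type*} [NormedAddCommGroup E] [NormedSpace ℝ E] (h : ℂ → E) :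
    ∫ z, h z ∂gaussMeasure = ∫ z, (Real.exp (-(‖z‖ ^ 2)) / Real.pi) • h z := by
  rw [gaussMeasure, integral_withDensity_eq_integral_toReal_smul measurable_gaussDensity
    (by simp)]
  congr 1 with z
  rw [ENNReal.toReal_ofReal (by positivity)]

theorem integrable_gaussMeasure {E : Type*} [NormedAddCommGroup E] [NormedSpace ℝ E]
    {h : ℂ → E} : Integrable h gaussMeasure ↔
      Integrable fun z => (Real.exp (-(‖z‖ ^ 2)) / Real.pi) • h z := by
  rw [gaussMeasure, integrable_withDensity_iff_integrable_smul' measurable_gaussDensity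
    (by simp)]
  refine integrable_congr (.of_forall fun z => ?_)
  simp only
  rw [ENNReal.toReal_ofReal (by positivity)]

theorem MemFock.pow (k : ℕ) : MemFock fun z => z ^ k := by
  refine ⟨by unfold Entire; fun_prop, integrable_gaussMeasure.2 ?_⟩
  have key := Complex.integral_rpow_mul_exp_neg_rpow (p := 2) (q := 2 * k) (by norm_num)
    (by have : (0 : ℝ) ≤ k := k.cast_nonneg
        linarith)
  have hint : Integrable fun x : ℂ => ‖x‖ ^ (2 * k : ℝ) * Real.exp (-‖x‖ ^ (2 : ℝ)) := by
    refine not_imp_comm.1 integral_undef ?_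
    rw [key]
    have : 0 < Real.Gamma ((2 * k + 2) / 2) := Real.Gamma_pos_of_pos (by positivity)
    positivity
  refine (hint.const_mul Real.pi⁻¹).congr (.of_forall fun z => ?_)
  have h1 : ‖z‖ ^ (2 * k : ℝ) = (‖z‖ ^ k) ^ 2 := by
    rw [← pow_mul, mul_comm k, ← Real.rpow_natCast]
    push_cast
    rfl
  simp only [h1, Real.rpow_two, norm_pow, smul_eq_mul]
  ring

theorem MemFock.const_mul {f : ℂ → ℂ} (hf : MemFock f) (c : ℂ) : MemFock fun z => c * f z := by
  refine ⟨Differentiable.const_mul hf.1 c, (hf.2.const_mul (‖c‖ ^ 2)).congr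
    (.of_forall fun z => ?_)⟩
  simp [mul_pow]

theorem MemFock.memLp {f : ℂ → ℂ} (hf : MemFock f) : MemLp f 2 gaussMeasure :=
  (memLp_two_iff_integrable_sq_norm (Differentiable.continuous hf.1).aestronglyMeasurable).2 hf.2

theorem MemFock.add {f g : ℂ → ℂ} (hf : MemFock f) (hg : MemFock g) :
    MemFock fun z => f z + g z :=
  ⟨Differentiable.add hf.1 hg.1, (hf.memLp.add hg.memLp).integrable_norm_pow (by norm_num)⟩

theorem MemFock.integrable_mul_conj {f g : ℂ → ℂ} (hf : MemFock f) (hg : MemFock g) :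
    Integrable (fun z => f z * (starRingEnd ℂ) (g z)) gaussMeasure :=
  hf.memLp.integrable_mul hg.memLp.star

theorem fockInner_self (f : ℂ → ℂ) : fockInner f f = fockNormSq f := by
  simp only [fockInner, fockNormSq, Complex.mul_conj', ← integral_complex_ofReal,
    Complex.ofReal_pow]

/-- The circle average of an entire function against `conj z ^ k` picks out a Taylor coefficient. -/
theorem integral_polar_mul_conj_pow {F : ℂ → ℂ} (hF : Differentiable ℂ F) (k : ℕ) {r : ℝ}
    (hr : 0 < r) :
    ∫ θ in Set.Ioo (-Real.pi) Real.pi, F (Complex.polarCoord.symm (r, θ)) *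
        (starRingEnd ℂ) (Complex.polarCoord.symm (r, θ) ^ k) =
      2 * Real.pi * r ^ (2 * k) * (iteratedDeriv k F 0 / k.factorial) := by
  have hsymm : ∀ θ : ℝ, Complex.polarCoord.symm (r, θ) = circleMap 0 r θ := fun θ => by
    simp [circleMap, Complex.exp_mul_I]
  simp only [hsymm]
  have hper : Function.Periodic
      (fun θ => F (circleMap 0 r θ) * (starRingEnd ℂ) (circleMap 0 r θ ^ k)) (2 * Real.pi) :=
    fun θ => by simp only [periodic_circleMap 0 r θ]
  have hshift := hper.intervalIntegral_add_eq (-Real.pi) 0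
  rw [show -Real.pi + 2 * Real.pi = Real.pi by ring, zero_add] at hshift
  rw [← integral_Ioc_eq_integral_Ioo,
    ← intervalIntegral.integral_of_le (by linarith [Real.pi_pos]), hshift]
  have hC := hF.differentiableOn.circleIntegral_one_div_sub_center_pow_smul (c := 0) hr k
  rw [circleIntegral] at hC
  have hpt : ∀ θ : ℝ, F (circleMap 0 r θ) * (starRingEnd ℂ) (circleMap 0 r θ ^ k) =
      (r ^ (2 * k) * (-I)) * (deriv (circleMap 0 r) θ •
        (1 / (circleMap 0 r θ - 0) ^ (k + 1)) • F (circleMap 0 r θ)) := fun θ => by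
    have hz : circleMap 0 r θ ≠ 0 := circleMap_ne_center hr.ne'
    have hn : circleMap 0 r θ * (starRingEnd ℂ) (circleMap 0 r θ) = (r : ℂ) ^ 2 := by
      rw [Complex.mul_conj', norm_circleMap_zero, abs_of_pos hr]
    rw [pow_mul, ← hn, deriv_circleMap, map_pow]
    simp only [smul_eq_mul, sub_zero]
    field_simp
    rw [mul_pow]
    linear_combination ((circleMap 0 r θ) ^ k * F (circleMap 0 r θ) *
      (starRingEnd ℂ) (circleMap 0 r θ) ^ k * circleMap 0 r θ) * Complex.I_sq
  simp only [hpt]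
  rw [intervalIntegral.integral_const_mul, hC]
  simp only [smul_eq_mul]
  linear_combination (-2 * Real.pi * r ^ (2 * k) * (iteratedDeriv k F 0 / k.factorial)) *
    Complex.I_sq

theorem integrableOn_polarCoord_smul {G : ℂ → ℂ} (hG : Continuous G) (hi : Integrable G) :
    IntegrableOn (fun p : ℝ × ℝ => p.1 • G (Complex.polarCoord.symm p)) polarCoord.target := by
  have hc : Continuous fun p : ℝ × ℝ => p.1 • G (Complex.polarCoord.symm p) := by
    simp only [Complex.polarCoord_symm_apply]
    fun_prop
  refine ⟨hc.aestronglyMeasurable, ?_⟩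
  have h := Complex.lintegral_comp_polarCoord_symm fun z => ‖G z‖ₑ
  have h2 := hi.2
  rw [HasFiniteIntegral, ← h] at h2
  refine lt_of_eq_of_lt (setLIntegral_congr_fun polarCoord.open_target.measurableSet ?_) h2
  intro p hp
  have hp1 : (0 : ℝ) < p.1 := hp.1
  simp only [enorm_smul, Real.enorm_eq_ofReal hp1.le, smul_eq_mul]

theorem integral_pow_mul_exp_neg_sq (k : ℕ) :
    ∫ r in Set.Ioi (0 : ℝ), r ^ (2 * k + 1) * Real.exp (-r ^ 2) = k.factorial / 2 := by
  have h := _root_.integral_rpow_mul_exp_neg_rpow (p := 2) (q := (2 * k + 1 : ℕ)) (by norm_num)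
    (by have : (0 : ℝ) ≤ (2 * k + 1 : ℕ) := Nat.cast_nonneg _
        linarith)
  simp only [Real.rpow_natCast, Real.rpow_two] at h
  rw [h, show (((2 * k + 1 : ℕ) : ℝ) + 1) / 2 = k + 1 by push_cast; ring,
    Real.Gamma_nat_eq_factorial]
  ring

/-- Pairing with `z ^ k` in the Fock space computes the `k`-th derivative at the origin. -/
theorem fockInner_pow {F : ℂ → ℂ} (hF : MemFock F) (k : ℕ) :
    fockInner F (fun z => z ^ k) = iteratedDeriv k F 0 := by
  have hc : Continuous F := Differentiable.continuous hF.1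
  have hi := integrable_gaussMeasure.1 (hF.integrable_mul_conj (MemFock.pow k))
  rw [fockInner, integral_gaussMeasure, ← Complex.integral_comp_polarCoord_symm]
  have hi' := integrableOn_polarCoord_smul (by fun_prop) hi
  rw [polarCoord_target, Measure.volume_eq_prod] at hi' ⊢
  rw [setIntegral_prod _ hi']
  have hin : ∀ r ∈ Set.Ioi (0 : ℝ), ∫ θ in Set.Ioo (-Real.pi) Real.pi,
      (r • (Real.exp (-(‖Complex.polarCoord.symm (r, θ)‖ ^ 2)) / Real.pi) •
        (F (Complex.polarCoord.symm (r, θ)) *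
          (starRingEnd ℂ) (Complex.polarCoord.symm (r, θ) ^ k))) =
      ((r ^ (2 * k + 1) * Real.exp (-r ^ 2) : ℝ) : ℂ) *
        (2 * (iteratedDeriv k F 0 / k.factorial)) := fun r hr => by
    simp only [Complex.norm_polarCoord_symm, sq_abs]
    rw [integral_smul, integral_smul, integral_polar_mul_conj_pow hF.1 k hr]
    have hpi : (Real.pi : ℂ) ≠ 0 := by exact_mod_cast Real.pi_ne_zero
    simp only [Complex.real_smul]
    push_cast
    field_simp
    ring
  rw [setIntegral_congr_fun measurableSet_Ioi hin, integral_mul_const]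
  have hf : (k.factorial : ℂ) ≠ 0 := by exact_mod_cast k.factorial_ne_zero
  rw [integral_complex_ofReal, integral_pow_mul_exp_neg_sq]
  push_cast
  field_simp

/-- The unitary Weyl translation `f ↦ e^{p̄ z - |p|²/2} f(z - p)` of the Fock space. -/
noncomputable def fockTranslate (p : ℂ) (f : ℂ → ℂ) : ℂ → ℂ := fun z =>
  Complex.exp ((starRingEnd ℂ) p * z - (‖p‖ : ℂ) ^ 2 / 2) * f (z - p)

theorem exp_neg_normSq_mul_normSq_exp (p z : ℂ) :
    Real.exp (-(‖z‖ ^ 2)) * ‖Complex.exp ((starRingEnd ℂ) p * z - (‖p‖ : ℂ) ^ 2 / 2)‖ ^ 2 =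
      Real.exp (-(‖z - p‖ ^ 2)) := by
  rw [Complex.norm_exp, ← Real.exp_nat_mul, ← Real.exp_add]
  have h : (‖p‖ : ℂ) ^ 2 / 2 = ((‖p‖ ^ 2 / 2 : ℝ) : ℂ) := by push_cast; rfl
  rw [h]
  congr 1
  simp only [Complex.sq_norm, Complex.normSq_apply, Complex.sub_re, Complex.sub_im,
    Complex.mul_re, Complex.conj_re, Complex.conj_im, Complex.ofReal_re]
  push_cast
  ring

theorem MemFock.fockTranslate {f : ℂ → ℂ} (hf : MemFock f) (p : ℂ) :
    MemFock (fockTranslate p f) := by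
  have hd : Differentiable ℂ f := hf.1
  refine ⟨by unfold Entire _root_.fockTranslate; fun_prop, integrable_gaussMeasure.2 ?_⟩
  refine ((integrable_gaussMeasure.1 hf.2).comp_sub_right p).congr (.of_forall fun z => ?_)
  simp only [_root_.fockTranslate, smul_eq_mul, norm_mul, mul_pow,
    ← exp_neg_normSq_mul_normSq_exp]
  ring

theorem fockInner_fockTranslate (p : ℂ) (f g : ℂ → ℂ) :
    fockInner (fockTranslate p f) (fockTranslate p g) = fockInner f g := by
  rw [fockInner, fockInner, integral_gaussMeasure, integral_gaussMeasure,
    ← integral_sub_right_eq_self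
      (fun z => (Real.exp (-(‖z‖ ^ 2)) / Real.pi) • (f z * (starRingEnd ℂ) (g z))) p]
  congr 1 with z
  simp only [fockTranslate, ← exp_neg_normSq_mul_normSq_exp, Complex.real_smul, map_mul]
  rw [Complex.ofReal_div, Complex.ofReal_div, Complex.ofReal_mul, Complex.ofReal_pow,
    ← Complex.mul_conj' (Complex.exp _)]
  ring

theorem fockTranslate_neg_fockTranslate (p : ℂ) (f : ℂ → ℂ) :
    fockTranslate (-p) (fockTranslate p f) = f := by
  ext z
  simp only [fockTranslate, ← mul_assoc, ← Complex.exp_add, norm_neg, map_neg]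
  rw [← Complex.mul_conj']
  ring_nf
  simp

/-- Conjugation by the translation to the fixed point turns `C_{ψ,φ}` into `C_{q,az}`. -/
theorem wcomp_fockTranslate {a b p : ℂ} (hb : b = p * (1 - a)) (ψ g : ℂ → ℂ) :
    wcomp ψ (fun z => a * z + b) (fockTranslate p g) = fockTranslate p
      (wcomp (fun z => Complex.exp ((starRingEnd ℂ) p * (a - 1) * z) * ψ (z + p))
        (fun z => a * z) g) := by
  ext z
  simp only [wcomp, fockTranslate, sub_add_cancel, ← mul_assoc, ← Complex.exp_add]
  rw [mul_comm (ψ z), hb]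
  ring_nf

theorem iteratedDeriv_mul_pow_zero {q : ℂ → ℂ} (hq : Differentiable ℂ q) (j k : ℕ) :
    iteratedDeriv j (fun z => q z * z ^ k) 0 = j.descFactorial k * iteratedDeriv (j - k) q 0 := by
  simp only [mul_comm (q _)]
  rw [iteratedDeriv_fun_mul (by fun_prop) hq.contDiff.contDiffAt]
  simp only [iteratedDeriv_pow]
  rw [Finset.sum_eq_single k]
  · rw [Nat.descFactorial_self, Nat.descFactorial_eq_factorial_mul_choose]
    rw [Nat.sub_self, pow_zero]
    push_cast
    ring
  · intro i _ hik
    rcases lt_or_gt_of_ne hik with h | h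
    · simp [Nat.sub_ne_zero_of_lt h]
    · simp [Nat.descFactorial_eq_zero_iff_lt.2 h]
  · intro hk
    rw [Nat.choose_eq_zero_of_lt (by simpa using hk)]
    simp

theorem iteratedDeriv_mul_binomial_zero {q : ℂ → ℂ} (hq : Differentiable ℂ q) (j k l : ℕ)
    (x y : ℂ) :
    iteratedDeriv j (fun z => q z * (x * z ^ k + y * z ^ l)) 0 =
      x * (j.descFactorial k * iteratedDeriv (j - k) q 0) +
        y * (j.descFactorial l * iteratedDeriv (j - l) q 0) := by
  have hc : ∀ i : ℕ, ContDiffAt ℂ j (fun z => q z * z ^ i) 0 := fun i =>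
    (show Differentiable ℂ fun z => q z * z ^ i by fun_prop).contDiff.contDiffAt
  have h : (fun z => q z * (x * z ^ k + y * z ^ l)) =
      fun z => x * (q z * z ^ k) + y * (q z * z ^ l) := by
    ext z
    ring
  rw [h, iteratedDeriv_fun_add (contDiffAt_const.mul (hc k)) (contDiffAt_const.mul (hc l)),
    iteratedDeriv_const_mul _ (hc k), iteratedDeriv_const_mul _ (hc l),
    iteratedDeriv_mul_pow_zero hq, iteratedDeriv_mul_pow_zero hq]

theorem fockInner_binomial {F : ℂ → ℂ} (hF : MemFock F) (k l : ℕ) (x y : ℂ) :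
    fockInner F (fun z => x * z ^ k + y * z ^ l) =
      (starRingEnd ℂ) x * iteratedDeriv k F 0 + (starRingEnd ℂ) y * iteratedDeriv l F 0 := by
  rw [← fockInner_pow hF k, ← fockInner_pow hF l]
  simp only [fockInner]
  rw [← integral_const_mul, ← integral_const_mul, ← integral_add
    ((hF.integrable_mul_conj (MemFock.pow k)).const_mul _)
    ((hF.integrable_mul_conj (MemFock.pow l)).const_mul _)]
  congr 1 with z
  simp only [map_add, map_mul]
  ring

/-- The numerical range of a `2 × 2` nilpotent matrix with off-diagonal entry `c` contains the
closed disk of radius `|c| / 2`. -/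
theorem exists_unit_pair_mul_conj_mul_eq {c w : ℂ} (h : ‖w‖ ≤ ‖c‖ / 2) :
    ∃ x y : ℂ, ‖x‖ ^ 2 + ‖y‖ ^ 2 = 1 ∧ x * (starRingEnd ℂ) y * c = w := by
  rcases eq_or_ne c 0 with rfl | hc
  · refine ⟨1, 0, by simp, ?_⟩
    have hw : w = 0 := by simpa using h
    simp [hw]
  have ht : ‖w / c‖ ≤ 1 / 2 := by
    rw [norm_div, div_le_iff₀ (norm_pos_iff.2 hc)]
    linarith
  set θ : ℝ := Real.arcsin (2 * ‖w / c‖) / 2 with hθ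
  have hs : 2 * Real.sin θ * Real.cos θ = 2 * ‖w / c‖ := by
    rw [← Real.sin_two_mul, hθ, mul_div_cancel₀ _ two_ne_zero]
    exact Real.sin_arcsin (by linarith [norm_nonneg (w / c)]) (by linarith)
  refine ⟨Complex.exp (Complex.arg (w / c) * I) * (Real.cos θ : ℝ), (Real.sin θ : ℝ), ?_, ?_⟩
  · rw [norm_mul, Complex.norm_exp_ofReal_mul_I, one_mul, Complex.norm_real, Complex.norm_real]
    simp only [Real.norm_eq_abs, sq_abs]
    exact Real.cos_sq_add_sin_sq θ
  · have hs' : (Real.sin θ : ℂ) * Real.cos θ = ‖w / c‖ := by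
      rw [← Complex.ofReal_mul]
      congr 1
      linarith
    rw [Complex.conj_ofReal]
    calc _ = ((Real.sin θ : ℂ) * Real.cos θ * Complex.exp (Complex.arg (w / c) * I)) * c := by ring
      _ = w := by rw [hs', Complex.norm_mul_exp_arg_mul_I, div_mul_cancel₀ _ hc]

/-- Theorem 2.3: for `φ(z)=az+b`, `0<|a|<1`, `ψ(p)=0` where `p=b/(1-a)`, and `C_{ψ,φ}`
bounded on `F²`, with `q(z)=e^{p̄(a-1)z}ψ(z+p) = Σ q̂_j z^j/√(j!)`, the numerical range
`W(C_{ψ,φ})` contains the closed disk centered at `0` of radius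
`|q̂_m a^n|√((n+m)!)/(2√(n!m!))` for every `n ≥ 0` and `m ≥ 1`. -/
theorem numRange_contains_closedBall
    (a b : ℂ) (ha0 : 0 < ‖a‖) (ha1 : ‖a‖ < 1)
    (ψ : ℂ → ℂ) (hψ : Entire ψ)
    (φ : ℂ → ℂ) (hφ : φ = fun z => a * z + b)
    (hbdd : BoundedWCO ψ φ)
    (p : ℂ) (hp : p = b / (1 - a)) (hψp : ψ p = 0)
    (q : ℂ → ℂ) (hq : q = fun z => Complex.exp ((starRingEnd ℂ) p * (a - 1) * z) * ψ (z + p))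
    (qhat : ℕ → ℂ)
    (hqhat : ∀ j : ℕ, qhat j = iteratedDeriv j q 0 / (Real.sqrt (Nat.factorial j) : ℂ))
    (n m : ℕ) (hm : 0 < m) :
    Metric.closedBall (0 : ℂ) (‖qhat m * a ^ n‖ * Real.sqrt (Nat.factorial (n + m)) /
        (2 * (Real.sqrt (Nat.factorial n) * Real.sqrt (Nat.factorial m)))) ⊆
      numRange ψ φ := by
  have ha : 1 - a ≠ 0 := fun h => by
    rw [← sub_eq_zero.1 h, norm_one] at ha1
    exact lt_irrefl _ ha1
  have hb : b = p * (1 - a) := by rw [hp, div_mul_cancel₀ _ ha]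
  have hψd : Differentiable ℂ ψ := hψ
  have hqd : Differentiable ℂ q := by rw [hq]; fun_prop
  have hq0 : q 0 = 0 := by simp [hq, hψp]
  have hsq : ∀ j : ℕ, ((Real.sqrt j.factorial : ℝ) : ℂ) ^ 2 = j.factorial := fun j => by
    rw [← Complex.ofReal_pow, Real.sq_sqrt (Nat.cast_nonneg _), Complex.ofReal_natCast]
  have hne : ∀ j : ℕ, ((Real.sqrt j.factorial : ℝ) : ℂ) ≠ 0 := fun j => by
    rw [Complex.ofReal_ne_zero]
    have := j.factorial_pos
    positivity
  intro w hw
  rw [mem_closedBall_zero_iff] at hw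
  set c : ℂ := qhat m * a ^ n * Real.sqrt (n + m).factorial /
    (Real.sqrt n.factorial * Real.sqrt m.factorial) with hc
  obtain ⟨x, y, hxy, hw'⟩ := exists_unit_pair_mul_conj_mul_eq (c := c) (w := w) <| by
    refine hw.trans_eq ?_
    simp only [hc, norm_div, norm_mul, Complex.norm_real, Real.norm_eq_abs,
      abs_of_nonneg (Real.sqrt_nonneg _)]
    rw [div_div, mul_comm (2 : ℝ)]
  set X : ℂ := x / Real.sqrt n.factorial with hX
  set Y : ℂ := y / Real.sqrt (n + m).factorial with hY
  set g : ℂ → ℂ := fun z => X * z ^ n + Y * z ^ (n + m) with hg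
  have hgF : MemFock g := ((MemFock.pow n).const_mul X).add ((MemFock.pow (n + m)).const_mul Y)
  have hdesc : n.descFactorial (n + m) = 0 := Nat.descFactorial_eq_zero_iff_lt.2 (by omega)
  have hgg : fockInner g g = 1 := by
    rw [hg, fockInner_binomial hgF]
    have h1 := fun j => iteratedDeriv_mul_binomial_zero (q := fun _ => 1)
      (differentiable_const _) j n (n + m) X Y
    simp only [one_mul] at h1
    rw [h1, h1, hdesc, Nat.descFactorial_self, Nat.descFactorial_self]
    simp only [Nat.sub_self, Nat.add_sub_cancel_left, iteratedDeriv_const, hm.ne', if_false]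
    have hx : (starRingEnd ℂ) X * X * n.factorial = (‖x‖ : ℂ) ^ 2 := by
      rw [← Complex.conj_mul', ← hsq n, hX, map_div₀, Complex.conj_ofReal]
      field_simp [hne n]
    have hy : (starRingEnd ℂ) Y * Y * (n + m).factorial = (‖y‖ : ℂ) ^ 2 := by
      rw [← Complex.conj_mul', ← hsq (n + m), hY, map_div₀, Complex.conj_ofReal]
      field_simp [hne (n + m)]
    have hxy' : (‖x‖ : ℂ) ^ 2 + (‖y‖ : ℂ) ^ 2 = 1 := by exact_mod_cast hxy
    push_cast
    linear_combination hx + hy + hxy'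
  have hconj : wcomp ψ φ (fockTranslate p g) =
      fockTranslate p (wcomp q (fun z => a * z) g) := by
    rw [hφ, hq, wcomp_fockTranslate hb]
  have hT : MemFock (wcomp q (fun z => a * z) g) := by
    obtain ⟨C, hC⟩ := hbdd
    have h := ((hC _ (hgF.fockTranslate p)).1).fockTranslate (-p)
    rwa [hconj, fockTranslate_neg_fockTranslate] at h
  refine ⟨fockTranslate p g, hgF.fockTranslate p, ?_, ?_⟩
  · rw [← Complex.ofReal_inj, ← fockInner_self, fockInner_fockTranslate, hgg, Complex.ofReal_one]
  rw [hconj, fockInner_fockTranslate, hg, fockInner_binomial hT]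
  have hTg : wcomp q (fun z => a * z) g =
      fun z => q z * (X * a ^ n * z ^ n + Y * a ^ (n + m) * z ^ (n + m)) := by
    ext z
    simp only [wcomp, hg, mul_pow, mul_assoc]
  rw [hTg, iteratedDeriv_mul_binomial_zero hqd, iteratedDeriv_mul_binomial_zero hqd, hdesc]
  simp only [Nat.sub_self, iteratedDeriv_zero, hq0, Nat.add_sub_cancel_left]
  have hfac : ((n + m).descFactorial n : ℂ) * m.factorial = (n + m).factorial := by
    have h := Nat.factorial_mul_descFactorial (Nat.le_add_right n m)
    rw [Nat.add_sub_cancel_left] at h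
    rw [mul_comm]
    exact_mod_cast h
  rw [← hsq, ← hsq] at hfac
  have hdf := eq_div_of_mul_eq (pow_ne_zero 2 (hne m)) hfac
  rw [← hw', hc, hX, hY, hqhat, hdf, map_div₀ _ y, Complex.conj_ofReal]
  have := hne n
  have := hne m
  have := hne (n + m)
  push_cast
  field_simp
  ring
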